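/- Let F = {f_i : B_i → int(B)} be a locally contractive piecewise continuous map on (B,{B_i}) with the separation property. Then the set K₀ = ∩_{k≥1} F^k(B) is nonempty, compact, and totally disconnected. -/

import Mathlib

/-!
Measure a set by the supremum of the diameters of its preconnected subsets. By separation, a
preconnected subset of `F(H)` lies in a single compact image `f_i(B_i)`; since `f_i` is a
homeomorphism onto that image, it is `f_i(t)` for a preconnected `t ⊆ B_i ∩ H`. Hence `F`
multiplies this quantity by at most `λ`, although the diameter of `F(H)` itself need not be small.
On `K₀` the quantity is thus at most `λ^k · diam B` for every `k`, so it vanishes and `K₀` is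
totally disconnected. The rest is Cantor's theorem for the decreasing compact sets `F^k(B)`.
-/

/-!
Common definitions for "Topological dynamics of generic piecewise continuous
contractive maps in n dimensions" (Catsigeras–Budelli).

`X` plays the role of the compact set `B ⊆ ℝⁿ` (homeomorphic to a compact ball),
endowed with a metric `dist` inducing its subspace topology: we model this by a
metric space `X` together with a topological embedding `j : X → ℝⁿ` and a
homeomorphism of `X` with the closed unit ball.
-/

namespace PWC

variable {X : Type} [MetricSpace X]

/-- A finite partition of the space `X` (the ball `B`): `m` nonempty compact pieces
covering `X`, with pairwise disjoint interiors. -/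
def IsFinPartition {m : ℕ} (P : Fin m → Set X) : Prop :=
  (∀ i, (P i).Nonempty) ∧ (∀ i, IsCompact (P i)) ∧ (⋃ i, P i) = Set.univ ∧
    ∀ i j : Fin m, i ≠ j → interior (P i) ∩ interior (P j) = ∅

/-- The separation line `S = ⋃ i ∂B_i` (frontiers taken in `B`). -/
def sepLine {m : ℕ} (P : Fin m → Set X) : Set X := ⋃ i, frontier (P i)

/-- A piecewise continuous map on `(B, {B_i})`: each `f i` is a homeomorphism of the
piece `P i` onto its image, and the image is contained in the interior of `B`
(i.e. of `Set.range j`) in `ℝⁿ`. -/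
def IsPCMap {n m : ℕ} (j : X → EuclideanSpace ℝ (Fin n)) (P : Fin m → Set X)
    (f : Fin m → X → X) : Prop :=
  ∀ i, ContinuousOn (f i) (P i) ∧ Set.InjOn (f i) (P i) ∧
    (∃ finv : X → X, ContinuousOn finv (f i '' P i) ∧ ∀ x ∈ P i, finv (f i x) = x) ∧
    ∀ x ∈ P i, j (f i x) ∈ interior (Set.range j)

/-- The separation property: different continuity pieces have disjoint images. -/
def SepProp {m : ℕ} (P : Fin m → Set X) (f : Fin m → X → X) : Prop :=
  ∀ i i' : Fin m, i ≠ i' → (f i '' P i) ∩ (f i' '' P i') = ∅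

/-- `F` is uniformly locally contractive with contraction rate `lam ∈ (0,1)`. -/
def LocContr {m : ℕ} (P : Fin m → Set X) (f : Fin m → X → X) (lam : ℝ) : Prop :=
  0 < lam ∧ lam < 1 ∧ ∀ i, ∀ x ∈ P i, ∀ y ∈ P i, dist (f i x) (f i y) ≤ lam * dist x y

/-- Image of a set: `F(H) = ⋃_{x ∈ H} {f i x : x ∈ B_i}`. -/
def setImage {m : ℕ} (P : Fin m → Set X) (f : Fin m → X → X) (H : Set X) : Set X :=
  ⋃ i, f i '' (P i ∩ H)

/-- Iterated image: `F⁰(H) = H`, `F^{k+1}(H) = F^k(F(H)) = F(F^k(H))`. -/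
def iterSet {m : ℕ} (P : Fin m → Set X) (f : Fin m → X → X) : ℕ → Set X → Set X
  | 0, H => H
  | k + 1, H => setImage P f (iterSet P f k H)

/-- A future orbit: `o (k+1) ∈ F (o k)` for all `k`. -/
def IsOrbit {m : ℕ} (P : Fin m → Set X) (f : Fin m → X → X) (o : ℕ → X) : Prop :=
  ∀ k : ℕ, ∃ i, o k ∈ P i ∧ o (k + 1) = f i (o k)

/-- The limit set of a sequence: points which are limits of some subsequence. -/
def orbitLimit (o : ℕ → X) : Set X :=
  {y | ∃ φ : ℕ → ℕ, StrictMono φ ∧ Filter.Tendsto (fun k => o (φ k)) Filter.atTop (nhds y)}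

/-- The limit set `L⁺(F)`: union of the limit sets of all future orbits of all points. -/
def limitSet {m : ℕ} (P : Fin m → Set X) (f : Fin m → X → X) : Set X :=
  ⋃ o ∈ {o : ℕ → X | IsOrbit P f o}, orbitLimit o

/-- `L` is a periodic orbit (limit cycle) of minimal period `p ≥ 1` of `F`. -/
def IsPeriodicOrbit {m : ℕ} (P : Fin m → Set X) (f : Fin m → X → X) (L : Set X)
    (p : ℕ) : Prop :=
  1 ≤ p ∧ ∃ o : ℕ → X, IsOrbit P f o ∧ (∀ k, o (k + p) = o k) ∧
    (∀ q : ℕ, 1 ≤ q → (∀ k, o (k + q) = o k) → p ≤ q) ∧ L = Set.range o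

/-- `F` is finally periodic: its limit set is the union of (at least one and) finitely
many periodic orbits. -/
def FinallyPeriodic {m : ℕ} (P : Fin m → Set X) (f : Fin m → X → X) : Prop :=
  ∃ (N : ℕ) (L : Fin N → Set X) (p : Fin N → ℕ), 1 ≤ N ∧
    (∀ a, IsPeriodicOrbit P f (L a) (p a)) ∧ limitSet P f = ⋃ a, L a

/-- `G = {g_i : A_i → B}` (with contraction rate `lamG`) is an `ε`-perturbation of
`F = {f_i : B_i → B}` (with contraction rate `lamF`). -/
def IsPerturbation {m : ℕ} (P : Fin m → Set X) (f : Fin m → X → X) (lamF : ℝ)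
    (Q : Fin m → Set X) (g : Fin m → X → X) (lamG : ℝ) (ε : ℝ) : Prop :=
  (∀ i, ∀ x ∈ P i ∩ Q i, dist (f i x) (g i x) < ε) ∧ |lamF - lamG| < ε ∧
    ∀ i, Metric.hausdorffDist (P i) (Q i) < ε

/-- The limit cycles `L a` (of periods `p a`) of `F` are persistent. -/
def PersistentCycles {n m : ℕ} (j : X → EuclideanSpace ℝ (Fin n)) (P : Fin m → Set X)
    (f : Fin m → X → X) (lamF : ℝ) {N : ℕ} (L : Fin N → Set X) (p : Fin N → ℕ) : Prop :=
  ∀ εs : ℝ, 0 < εs → ∃ ε : ℝ, 0 < ε ∧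
    ∀ (Q : Fin m → Set X) (g : Fin m → X → X) (lamG : ℝ),
      IsFinPartition Q → IsPCMap j Q g → LocContr Q g lamG →
      IsPerturbation P f lamF Q g lamG ε →
      ∃ LG : Fin N → Set X, (∀ a, IsPeriodicOrbit Q g (LG a) (p a)) ∧
        limitSet Q g = (⋃ a, LG a) ∧ ∀ a, Metric.hausdorffDist (LG a) (L a) < εs

/-- `F` is finally periodic with persistent limit cycles. -/
def FPwithPersistent {n m : ℕ} (j : X → EuclideanSpace ℝ (Fin n)) (P : Fin m → Set X)
    (f : Fin m → X → X) (lamF : ℝ) : Prop :=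
  ∃ (N : ℕ) (L : Fin N → Set X) (p : Fin N → ℕ), 1 ≤ N ∧
    (∀ a, IsPeriodicOrbit P f (L a) (p a)) ∧ limitSet P f = (⋃ a, L a) ∧
    PersistentCycles j P f lamF L p

/-- The atom of generation `w.length` with word `w`; the head of the list is the
*last* map applied, i.e. `atom [i_k, …, i_1] = f_{i_k} ∘ ⋯ ∘ f_{i_1} (B_{i_1})`,
restricted to the set where the composition is defined. -/
def atom {m : ℕ} (P : Fin m → Set X) (f : Fin m → X → X) : List (Fin m) → Set X
  | [] => Set.univ
  | i :: w => f i '' (P i ∩ atom P f w)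

end PWC


open PWC

namespace PWC

open Filter Function Metric Set Topology
open scoped ENNReal NNReal

section Preconnected

variable {X Y : Type*} [TopologicalSpace X] [TopologicalSpace Y]

theorem exists_subset_of_isPreconnected_of_subset_iUnion {ι : Type*} [Finite ι] {C : ι → Set X}
    (hC : ∀ i, IsClosed (C i)) (hdisj : Pairwise (Disjoint on C)) {s : Set X}
    (hs : IsPreconnected s) (hne : s.Nonempty) (hsC : s ⊆ ⋃ i, C i) : ∃ i, s ⊆ C i := by
  obtain ⟨x, hx⟩ := hne
  obtain ⟨i, hxi⟩ := mem_iUnion.1 (hsC hx)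
  let D : Set X := ⋃ i' : {i' // i' ≠ i}, C i'
  have hD : IsClosed D := isClosed_iUnion_of_finite fun i' => hC i'
  have hCD : Disjoint (C i) D := disjoint_iUnion_right.2 fun i' => hdisj i'.2.symm
  have hsCD : s ⊆ C i ∪ D := by
    intro y hy
    obtain ⟨i', hyi'⟩ := mem_iUnion.1 (hsC hy)
    obtain rfl | hne := eq_or_ne i' i
    · exact Or.inl hyi'
    · exact Or.inr (mem_iUnion.2 ⟨⟨i', hne⟩, hyi'⟩)
  have hsub := isPreconnected_iff_subset_of_disjoint_closed.1 hs (C i) D (hC i) hD hsCD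
    (by rw [hCD.inter_eq, inter_empty])
  exact ⟨i, hsub.resolve_right fun hsD => disjoint_left.1 hCD hxi (hsD hx)⟩

theorem isPreconnected_inter_preimage_of_injOn [T2Space Y] {f : X → Y} {A : Set X}
    (hA : IsCompact A) (hf : ContinuousOn f A) (hinj : InjOn f A) {s : Set Y}
    (hs : IsPreconnected s) (hsA : s ⊆ f '' A) : IsPreconnected (A ∩ f ⁻¹' s) := by
  have : CompactSpace A := isCompact_iff_compactSpace.1 hA
  have hpre : IsPreconnected (A.domRestrict f ⁻¹' s) :=
    hs.preimage_of_isClosedMap hinj.injective hf.domRestrict.isClosedMap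
      (by rwa [range_domRestrict])
  rw [← Subtype.image_preimage_coe]
  exact hpre.image _ continuous_subtype_val.continuousOn

end Preconnected

section ConnDiam

/-- The supremum of the diameters of the preconnected subsets of `H`. Only connected pieces count,
so it vanishes exactly on totally disconnected sets. It is `ℝ≥0∞`-valued so that the supremum needs
no boundedness assumption. -/
noncomputable def connDiam {X : Type*} [PseudoEMetricSpace X] (H : Set X) : ℝ≥0∞ :=
  ⨆ (s : Set X) (_ : s ⊆ H) (_ : IsPreconnected s), ediam s

section PseudoEMetricSpace

variable {X Y : Type*} [PseudoEMetricSpace X]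

theorem ediam_le_connDiam {s H : Set X} (hsH : s ⊆ H) (hs : IsPreconnected s) :
    ediam s ≤ connDiam H :=
  le_iSup₂_of_le s hsH (le_iSup_of_le hs le_rfl)

theorem connDiam_le_iff {H : Set X} {d : ℝ≥0∞} :
    connDiam H ≤ d ↔ ∀ s ⊆ H, IsPreconnected s → ediam s ≤ d := by
  simp only [connDiam, iSup_le_iff]

theorem connDiam_mono {H H' : Set X} (h : H ⊆ H') : connDiam H ≤ connDiam H' :=
  connDiam_le_iff.2 fun _ hs => ediam_le_connDiam (hs.trans h)

theorem connDiam_le_ediam (H : Set X) : connDiam H ≤ ediam H :=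
  connDiam_le_iff.2 fun _ hs _ => ediam_mono hs

theorem connDiam_iUnion_le {ι : Type*} [Finite ι] {A C : ι → Set X} (hAC : ∀ i, A i ⊆ C i)
    (hC : ∀ i, IsClosed (C i)) (hdisj : Pairwise (Disjoint on C)) :
    connDiam (⋃ i, A i) ≤ ⨆ i, connDiam (A i) := by
  refine connDiam_le_iff.2 fun s hsA hs => ?_
  obtain rfl | hne := s.eq_empty_or_nonempty
  · simp only [ediam_empty, zero_le]
  obtain ⟨i, hsC⟩ := exists_subset_of_isPreconnected_of_subset_iUnion hC hdisj hs hne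
    (hsA.trans (iUnion_mono hAC))
  have hsAi : s ⊆ A i := by
    intro x hx
    obtain ⟨i', hxi'⟩ := mem_iUnion.1 (hsA hx)
    obtain rfl : i' = i := hdisj.eq (not_disjoint_iff.2 ⟨x, hAC i' hxi', hsC hx⟩)
    exact hxi'
  exact (ediam_le_connDiam hsAi hs).trans (le_iSup (fun i => connDiam (A i)) i)

theorem ediam_image_le_of_lipschitzOnWith [PseudoEMetricSpace Y] {f : X → Y} {K : ℝ≥0} {s : Set X}
    (hf : LipschitzOnWith K f s) : ediam (f '' s) ≤ K * ediam s :=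
  ediam_image_le_iff.2 fun _ hx _ hy => hf.edist_le_mul_of_le hx hy (edist_le_ediam_of_mem hx hy)

theorem connDiam_image_le [EMetricSpace Y] {f : X → Y} {K : ℝ≥0} {A H : Set X} (hA : IsCompact A)
    (hf : LipschitzOnWith K f A) (hinj : InjOn f A) (hHA : H ⊆ A) :
    connDiam (f '' H) ≤ K * connDiam H := by
  refine connDiam_le_iff.2 fun s hsH hs => ?_
  have hsA : s ⊆ f '' A := hsH.trans (image_mono hHA)
  have hpre : IsPreconnected (A ∩ f ⁻¹' s) :=
    isPreconnected_inter_preimage_of_injOn hA hf.continuousOn hinj hs hsA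
  have hsub : A ∩ f ⁻¹' s ⊆ H := fun x ⟨hxA, hxs⟩ => (hinj.mem_image_iff hHA hxA).1 (hsH hxs)
  calc ediam s = ediam (f '' (A ∩ f ⁻¹' s)) := by
        rw [image_inter_preimage, inter_eq_right.2 hsA]
    _ ≤ K * ediam (A ∩ f ⁻¹' s) :=
        ediam_image_le_of_lipschitzOnWith (hf.mono inter_subset_left)
    _ ≤ K * connDiam H := by gcongr; exact ediam_le_connDiam hsub hpre

end PseudoEMetricSpace

theorem connDiam_eq_zero_iff {X : Type*} [EMetricSpace X] {H : Set X} :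
    connDiam H = 0 ↔ IsTotallyDisconnected H := by
  simp only [← nonpos_iff_eq_zero, connDiam_le_iff, IsTotallyDisconnected]
  simp only [nonpos_iff_eq_zero, ediam_eq_zero_iff]

end ConnDiam

section Iterates

variable {m : ℕ} {X : Type} {P : Fin m → Set X} {f : Fin m → X → X}

theorem setImage_mono {H H' : Set X} (h : H ⊆ H') : setImage P f H ⊆ setImage P f H' :=
  iUnion_mono fun _ => image_mono (inter_subset_inter_right _ h)

theorem setImage_nonempty (hP : ⋃ i, P i = univ) {H : Set X} (hH : H.Nonempty) :
    (setImage P f H).Nonempty := by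
  obtain ⟨x, hx⟩ := hH
  obtain ⟨i, hi⟩ := iUnion_eq_univ_iff.1 hP x
  exact ⟨f i x, mem_iUnion.2 ⟨i, mem_image_of_mem _ ⟨hi, hx⟩⟩⟩

theorem iterSet_nonempty (hP : ⋃ i, P i = univ) {H : Set X} (hH : H.Nonempty) (k : ℕ) :
    (iterSet P f k H).Nonempty := by
  induction k with
  | zero => exact hH
  | succ k ih => exact setImage_nonempty hP ih

theorem antitone_iterSet {H : Set X} (hH : setImage P f H ⊆ H) :
    Antitone fun k => iterSet P f k H := by
  refine antitone_nat_of_succ_le fun k => ?_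
  induction k with
  | zero => exact hH
  | succ k ih => exact setImage_mono ih

theorem isCompact_setImage [TopologicalSpace X] (hP : ∀ i, IsClosed (P i))
    (hf : ∀ i, ContinuousOn (f i) (P i)) {H : Set X} (hH : IsCompact H) :
    IsCompact (setImage P f H) :=
  isCompact_iUnion fun i =>
    (hH.inter_left (hP i)).image_of_continuousOn ((hf i).mono inter_subset_left)

theorem isCompact_iterSet [TopologicalSpace X] (hP : ∀ i, IsClosed (P i))
    (hf : ∀ i, ContinuousOn (f i) (P i)) {H : Set X} (hH : IsCompact H) (k : ℕ) :
    IsCompact (iterSet P f k H) := by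
  induction k with
  | zero => exact hH
  | succ k ih => exact isCompact_setImage hP hf ih

section Contraction

variable [EMetricSpace X] {K : ℝ≥0}

theorem connDiam_setImage_le (hP : ∀ i, IsCompact (P i))
    (hf : ∀ i, LipschitzOnWith K (f i) (P i)) (hinj : ∀ i, InjOn (f i) (P i))
    (hsep : SepProp P f) (H : Set X) : connDiam (setImage P f H) ≤ K * connDiam H :=
  calc connDiam (setImage P f H) ≤ ⨆ i, connDiam (f i '' (P i ∩ H)) :=
        connDiam_iUnion_le (fun _ => image_mono inter_subset_left)
          (fun i => ((hP i).image_of_continuousOn (hf i).continuousOn).isClosed)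
          fun i i' hne => disjoint_iff_inter_eq_empty.2 (hsep i i' hne)
    _ ≤ K * connDiam H := iSup_le fun i =>
        (connDiam_image_le (hP i) (hf i) (hinj i) inter_subset_left).trans
          (mul_right_mono (connDiam_mono inter_subset_right))

theorem connDiam_iterSet_le (hP : ∀ i, IsCompact (P i))
    (hf : ∀ i, LipschitzOnWith K (f i) (P i)) (hinj : ∀ i, InjOn (f i) (P i))
    (hsep : SepProp P f) (H : Set X) (k : ℕ) :
    connDiam (iterSet P f k H) ≤ K ^ k * connDiam H := by
  induction k with
  | zero => rw [pow_zero, one_mul, iterSet]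
  | succ k ih =>
    calc connDiam (iterSet P f (k + 1) H) ≤ K * connDiam (iterSet P f k H) :=
          connDiam_setImage_le hP hf hinj hsep _
      _ ≤ K * (K ^ k * connDiam H) := by gcongr
      _ = K ^ (k + 1) * connDiam H := by rw [pow_succ', mul_assoc]

theorem isTotallyDisconnected_iInter_iterSet (hP : ∀ i, IsCompact (P i))
    (hf : ∀ i, LipschitzOnWith K (f i) (P i)) (hK : K < 1) (hinj : ∀ i, InjOn (f i) (P i))
    (hsep : SepProp P f) {H : Set X} (hH : connDiam H ≠ ∞) :
    IsTotallyDisconnected (⋂ k, iterSet P f k H) := by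
  have hbound (k : ℕ) : connDiam (⋂ k, iterSet P f k H) ≤ K ^ k * connDiam H :=
    (connDiam_mono (iInter_subset _ k)).trans (connDiam_iterSet_le hP hf hinj hsep H k)
  have hlim : Tendsto (fun k : ℕ => (K : ℝ≥0∞) ^ k * connDiam H) atTop (𝓝 0) := by
    simpa only [zero_mul] using ENNReal.Tendsto.mul_const
      (ENNReal.tendsto_pow_atTop_nhds_zero_of_lt_one (ENNReal.coe_lt_one_iff.2 hK)) (Or.inr hH)
  exact connDiam_eq_zero_iff.1 (nonpos_iff_eq_zero.1 (ge_of_tendsto' hlim hbound))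

end Contraction

theorem LocContr.lipschitzOnWith [MetricSpace X] {lam : ℝ} (h : LocContr P f lam) (i : Fin m) :
    LipschitzOnWith lam.toNNReal (f i) (P i) :=
  LipschitzOnWith.of_dist_le_mul fun x hx y hy => by
    rw [Real.coe_toNNReal _ h.1.le]
    exact h.2.2 i x hx y hy

theorem iInter_iterSet_univ_of_one_le :
    ⋂ (k : ℕ) (_ : 1 ≤ k), iterSet P f k univ = ⋂ k, iterSet P f k univ := by
  refine Subset.antisymm (subset_iInter fun k => ?_)
    (iInter_mono fun _ => subset_iInter fun _ => Subset.rfl)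
  cases k with
  | zero => exact subset_univ _
  | succ k => exact biInter_subset_of_mem (Nat.le_add_left 1 k)

end Iterates

end PWC

theorem inter_iterates_nonempty_compact_totallyDisconnected_general
    {m : ℕ} {X : Type} [MetricSpace X] [CompactSpace X] [Nonempty X]
    {P : Fin m → Set X} {f : Fin m → X → X} {lam : ℝ}
    (hP : ∀ i, IsClosed (P i)) (hcover : ⋃ i, P i = Set.univ)
    (hinj : ∀ i, Set.InjOn (f i) (P i)) (hlc : LocContr P f lam) (hsep : SepProp P f) :
    (⋂ (k : ℕ) (_ : 1 ≤ k), iterSet P f k Set.univ).Nonempty ∧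
    IsCompact (⋂ (k : ℕ) (_ : 1 ≤ k), iterSet P f k Set.univ) ∧
    IsTotallyDisconnected (⋂ (k : ℕ) (_ : 1 ≤ k), iterSet P f k Set.univ) := by
  rw [iInter_iterSet_univ_of_one_le]
  have hcompact (k : ℕ) : IsCompact (iterSet P f k Set.univ) :=
    isCompact_iterSet hP (fun i => (hlc.lipschitzOnWith i).continuousOn) isCompact_univ k
  have hfinite : connDiam (Set.univ : Set X) ≠ ⊤ :=
    ne_top_of_le_ne_top isCompact_univ.isBounded.ediam_ne_top (connDiam_le_ediam _)
  refine ⟨?_, (isClosed_iInter fun k => (hcompact k).isClosed).isCompact, ?_⟩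
  · exact IsCompact.nonempty_iInter_of_sequence_nonempty_isCompact_isClosed _
      (fun k => antitone_iterSet (Set.subset_univ _) k.le_succ)
      (iterSet_nonempty hcover Set.univ_nonempty) (hcompact 0) fun k => (hcompact k).isClosed
  · exact isTotallyDisconnected_iInter_iterSet (fun i => (hP i).isCompact) hlc.lipschitzOnWith
      (Real.toNNReal_lt_one.2 hlc.2.1) hinj hsep hfinite

/-- For a locally contractive piecewise continuous map with the
separation property, `K₀ = ⋂_{k ≥ 1} F^k(B)` is nonempty, compact and totally
disconnected. -/
theorem inter_iterates_nonempty_compact_totallyDisconnected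
    {n m : ℕ} {X : Type} [MetricSpace X]
    (j : X → EuclideanSpace ℝ (Fin n))
    (hj : Topology.IsEmbedding j)
    (hball : Nonempty (X ≃ₜ (Metric.closedBall (0 : EuclideanSpace ℝ (Fin n)) 1)))
    (P : Fin m → Set X) (f : Fin m → X → X) (lamF : ℝ)
    (hP : IsFinPartition P) (hf : IsPCMap j P f) (hlc : LocContr P f lamF)
    (hsep : SepProp P f) :
    (⋂ (k : ℕ) (_ : 1 ≤ k), iterSet P f k Set.univ).Nonempty ∧
    IsCompact (⋂ (k : ℕ) (_ : 1 ≤ k), iterSet P f k Set.univ) ∧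
    IsTotallyDisconnected (⋂ (k : ℕ) (_ : 1 ≤ k), iterSet P f k Set.univ) := by
  obtain ⟨e⟩ := hball
  have : CompactSpace X := e.symm.compactSpace
  have : Nonempty X := ⟨e.symm ⟨0, Metric.mem_closedBall_self zero_le_one⟩⟩
  exact inter_iterates_nonempty_compact_totallyDisconnected_general (fun i => (hP.2.1 i).isClosed)
    hP.2.2.1 (fun i => (hf i).2.1) hlc hsep
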